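/- With G_{0,∞}(x,x';β) = (2πβ)^{-3/2} exp(−|x−x'|²/(2β)), G_{0,L}(x,x';β) = Π_{j=1}³ g_{0,L}(x_j,x'_j;β) the method-of-images cube heat kernel, and Z_{0,L} = G_{0,L} − G_{0,∞}: there exist numerical constants c₁, c₂ > 0 such that for all L ≥ 1, β > 0, x, x' ∈ (−L/2, L/2)³ and each j ∈ {1,2,3}: |∂Z_{0,L}/∂x_j (x, x'; β)| ≤ c₁ (1+β) β^{-1/2} G_{0,∞}(x, x'; c₂ β). -/

import Mathlib

open Real

/-- The one-dimensional Dirichlet method-of-images heat kernel on `(−L/2, L/2)`. -/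
noncomputable def g0L (L x x' β : ℝ) : ℝ :=
  (2 * π * β) ^ (-(1/2) : ℝ) *
    ∑' m : ℤ, (Real.exp (-(x - x' + 2 * m * L) ^ 2 / (2 * β)) -
      Real.exp (-(x + x' - 2 * m * L - L) ^ 2 / (2 * β)))

/-- The free heat kernel on `ℝ³`. -/
noncomputable def G0inf (x x' : Fin 3 → ℝ) (β : ℝ) : ℝ :=
  (2 * π * β) ^ (-(3/2) : ℝ) * Real.exp (-(∑ j, (x j - x' j) ^ 2) / (2 * β))

/-- The Dirichlet heat kernel of the cube `(−L/2, L/2)³`. -/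
noncomputable def G0L (L : ℝ) (x x' : Fin 3 → ℝ) (β : ℝ) : ℝ :=
  ∏ j, g0L L (x j) (x' j) β

/-- The boundary remainder `Z_{0,L} = G_{0,L} − G_{0,∞}`. -/
noncomputable def Z0L (L : ℝ) (x x' : Fin 3 → ℝ) (β : ℝ) : ℝ :=
  G0L L x x' β - G0inf x x' β

/-!
In one dimension, `g0L L x x' β = P (x - x') - P (x + x' + L)`, where `P` is the `2L`-periodization
of the free heat kernel. For `x, x'` in the interval, the lattice `x - x' + 2Lℤ` of direct images
and the lattice `x + x' + L + 2Lℤ` of reflected images interlace, and `x - x'` is the point of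
their union closest to the origin. Apart from that point, the images pair up into disjoint
intervals in `[|x - x'|, ∞)` and in `(-∞, -|x - x'|]`, so the remaining sum is at most the total
variation of the heat kernel on these half-lines. The same argument applies to the derivative of
the heat kernel. The variations are Gaussian in `|x - x'|` once the time is doubled, uniformly in
`L`, and the product rule for the three factors of `G0L` gives the bound on the cube.
-/

section Periodization

/-- `f` is dominated by a multiple of a Gaussian centred at the origin; this is what makes the
periodization of `f` and its termwise derivative converge. -/
def HasGaussianDecay (f : ℝ → ℝ) : Prop :=
  ∃ C c : ℝ, 0 < c ∧ ∀ y, |f y| ≤ C * exp (-c * y ^ 2)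

/-- The sum of the translates of `f` by the integer multiples of `p`, as a function of the base
point. -/
noncomputable def periodization (f : ℝ → ℝ) (p a : ℝ) : ℝ :=
  ∑' m : ℤ, f (a + m * p)

variable {f f' : ℝ → ℝ} {p : ℝ}

lemma summable_exp_neg_mul_int_sq {c : ℝ} (hc : 0 < c) :
    Summable fun m : ℤ => exp (-c * (m : ℝ) ^ 2) := by
  have h := HurwitzKernelBounds.summable_f_int 0 0 (div_pos hc pi_pos)
  refine h.congr fun m => ?_
  simp only [HurwitzKernelBounds.f_int, pow_zero, one_mul, add_zero]
  congr 1
  field_simp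

lemma HasGaussianDecay.exists_summable_bound_translates (hf : HasGaussianDecay f) (hp : p ≠ 0)
    (R : ℝ) : ∃ u : ℤ → ℝ, Summable u ∧ ∀ (m : ℤ) a, |a| ≤ R → |f (a + m * p)| ≤ u m := by
  obtain ⟨C, c, hc, hfC⟩ := hf
  have hC : 0 ≤ C := by simpa using (abs_nonneg _).trans (hfC 0)
  refine ⟨fun m => C * exp (c * R ^ 2) * exp (-(c * p ^ 2 / 2) * (m : ℝ) ^ 2),
    (summable_exp_neg_mul_int_sq (by positivity)).mul_left _, fun m a ha => (hfC _).trans ?_⟩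
  have hsq : (m * p) ^ 2 / 2 - R ^ 2 ≤ (a + m * p) ^ 2 := by
    linarith [sq_nonneg (2 * a + m * p), sq_le_sq' (abs_le.1 ha).1 (abs_le.1 ha).2]
  simp only [mul_assoc, ← exp_add]
  gcongr
  linarith [mul_le_mul_of_nonneg_left hsq hc.le]

lemma HasGaussianDecay.summable_translates (hf : HasGaussianDecay f) (hp : p ≠ 0) (a : ℝ) :
    Summable fun m : ℤ => f (a + m * p) := by
  obtain ⟨u, hu, hfu⟩ := hf.exists_summable_bound_translates hp |a|
  exact .of_norm_bounded hu fun m => hfu m a le_rfl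

lemma HasGaussianDecay.hasDerivAt_periodization (hf : HasGaussianDecay f)
    (hf' : HasGaussianDecay f') (hderiv : ∀ y, HasDerivAt f (f' y) y) (hp : p ≠ 0) (a : ℝ) :
    HasDerivAt (periodization f p) (periodization f' p a) a := by
  obtain ⟨u, hu, hfu⟩ := hf'.exists_summable_bound_translates hp (|a| + 1)
  have ha : a ∈ Set.Ioo (-(|a| + 1)) (|a| + 1) := abs_lt.1 (lt_add_one |a|)
  exact hasDerivAt_tsum_of_isPreconnected hu isOpen_Ioo isPreconnected_Ioo
    (fun m s _ => (hderiv _).comp_add_const s (m * p))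
    (fun m s hs => hfu m s (abs_lt.2 hs).le) ha (hf.summable_translates hp a) ha

lemma HasGaussianDecay.periodization_sub_periodization (hf : HasGaussianDecay f) (hp : p ≠ 0)
    (a b : ℝ) :
    periodization f p a - periodization f p b =
      f a - ∑' n : ℕ, (f (b + n * p) - f (a + (n + 1) * p))
        - ∑' n : ℕ, (f (b - (n + 1) * p) - f (a - (n + 1) * p)) := by
  have hnat (d : ℝ) : Summable fun n : ℕ => f (d + n * p) := by
    simpa only [Function.comp_def, Int.cast_natCast] using
      (hf.summable_translates hp d).comp_injective Nat.cast_injective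
  have hsucc (d : ℝ) : Summable fun n : ℕ => f (d + (n + 1) * p) := by
    simpa only [Nat.cast_add_one] using (summable_nat_add_iff 1).2 (hnat d)
  have hneg (d : ℝ) : Summable fun n : ℕ => f (d - (n + 1) * p) := by
    simpa only [Function.comp_def, Int.cast_negSucc, Nat.cast_add_one, neg_mul, ← sub_eq_add_neg]
      using (hf.summable_translates hp d).comp_injective @Int.negSucc.inj
  have ha : periodization f p a =
      ∑' n : ℕ, f (a + (n + 1) * p) + f a + ∑' n : ℕ, f (a - (n + 1) * p) := by
    simpa only [periodization, Int.cast_neg, Int.cast_add, Int.cast_natCast, Int.cast_one,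
      Int.cast_zero, zero_mul, add_zero, neg_mul, ← sub_eq_add_neg] using
      tsum_of_add_one_of_neg_add_one (f := fun m : ℤ => f (a + m * p))
        (by simpa only [Int.cast_add, Int.cast_natCast, Int.cast_one] using hsucc a)
        (by simpa only [Int.cast_neg, Int.cast_add, Int.cast_natCast, Int.cast_one, neg_mul,
          ← sub_eq_add_neg] using hneg a)
  have hb : periodization f p b = ∑' n : ℕ, f (b + n * p) + ∑' n : ℕ, f (b - (n + 1) * p) := by
    simpa only [periodization, Int.cast_neg, Int.cast_add, Int.cast_natCast, Int.cast_one,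
      Int.cast_zero, zero_mul, add_zero, neg_mul, ← sub_eq_add_neg] using
      tsum_of_nat_of_neg_add_one (f := fun m : ℤ => f (b + m * p))
        (by simpa only [Int.cast_add, Int.cast_natCast, Int.cast_one] using hnat b)
        (by simpa only [Int.cast_neg, Int.cast_add, Int.cast_natCast, Int.cast_one, neg_mul,
          ← sub_eq_add_neg] using hneg b)
  rw [ha, hb, (hnat b).tsum_sub (hsucc a), (hneg b).tsum_sub (hneg a)]
  ring

end Periodization

section VariationMajorant

/-- For every `a ≥ 0`, the value `Φ a` bounds the total variation of `f` on `[a, ∞)`. This is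
encoded by letting the decrements of `Φ` dominate the increments of `f`, so that bounds
telescope. -/
structure IsVariationMajorant (f Φ : ℝ → ℝ) : Prop where
  nonneg : ∀ ⦃a⦄, 0 ≤ a → 0 ≤ Φ a
  abs_sub_le : ∀ ⦃a b⦄, 0 ≤ a → a ≤ b → |f a - f b| ≤ Φ a - Φ b

variable {f f' Φ Φ' : ℝ → ℝ}

lemma IsVariationMajorant.antitoneOn (h : IsVariationMajorant f Φ) :
    AntitoneOn Φ (Set.Ici 0) := fun _ ha _ _ hab =>
  sub_nonneg.1 ((abs_nonneg _).trans (h.abs_sub_le ha hab))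

lemma IsVariationMajorant.of_abs_deriv_le (hΦ₀ : ∀ a, 0 ≤ a → 0 ≤ Φ a)
    (hf : ∀ y, HasDerivAt f (f' y) y) (hΦ : ∀ y, HasDerivAt Φ (Φ' y) y)
    (h : ∀ y, 0 < y → |f' y| ≤ -Φ' y) : IsVariationMajorant f Φ where
  nonneg := hΦ₀
  abs_sub_le a b ha hab := by
    have hanti {g g' : ℝ → ℝ} (hg : ∀ y, HasDerivAt g (g' y) y) (hg' : ∀ y, 0 < y → g' y ≤ 0) :
        g b ≤ g a :=
      antitoneOn_of_hasDerivWithinAt_nonpos (convex_Ici 0)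
        (fun y _ => (hg y).continuousAt.continuousWithinAt) (fun y _ => (hg y).hasDerivWithinAt)
        (fun y hy => hg' y (by simpa using hy)) ha (ha.trans hab) hab
    have hsub := hanti (fun y => (hΦ y).sub (hf y)) fun y hy => by linarith [(abs_le.1 (h y hy)).1]
    have hadd := hanti (fun y => (hΦ y).add (hf y)) fun y hy => by linarith [(abs_le.1 (h y hy)).2]
    simp only [Pi.sub_apply, Pi.add_apply] at hsub hadd
    exact abs_le.2 ⟨by linarith, by linarith⟩

lemma IsVariationMajorant.rescale (h : IsVariationMajorant f Φ) (c : ℝ) {s : ℝ} (hs : 0 < s) :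
    IsVariationMajorant (fun y => c * f (y / s)) fun y => |c| * Φ (y / s) where
  nonneg a ha := mul_nonneg (abs_nonneg c) (h.nonneg (by positivity))
  abs_sub_le a b ha hab := by
    rw [← mul_sub, ← mul_sub, abs_mul]
    gcongr
    exact h.abs_sub_le (by positivity) (by gcongr)

lemma IsVariationMajorant.abs_tsum_sub_le (h : IsVariationMajorant f Φ) {a : ℝ} {u v : ℕ → ℝ}
    (ha : 0 ≤ a) (hau : a ≤ u 0) (huv : ∀ n, u n ≤ v n) (hvu : ∀ n, v n ≤ u (n + 1)) :
    |∑' n, (f (u n) - f (v n))| ≤ Φ a := by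
  have hu : Monotone u := monotone_nat_of_le_succ fun n => (huv n).trans (hvu n)
  have hu_nonneg (n : ℕ) : 0 ≤ u n := (ha.trans hau).trans (hu n.zero_le)
  have hterm (n : ℕ) : |f (u n) - f (v n)| ≤ Φ (u n) - Φ (u (n + 1)) :=
    (h.abs_sub_le (hu_nonneg n) (huv n)).trans <| sub_le_sub_left
      (h.antitoneOn ((hu_nonneg n).trans (huv n)) (hu_nonneg (n + 1)) (hvu n)) _
  have hpartial (N : ℕ) : ∑ n ∈ Finset.range N, |f (u n) - f (v n)| ≤ Φ a :=
    calc ∑ n ∈ Finset.range N, |f (u n) - f (v n)|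
        ≤ ∑ n ∈ Finset.range N, (Φ (u n) - Φ (u (n + 1))) := Finset.sum_le_sum fun n _ => hterm n
      _ = Φ (u 0) - Φ (u N) := Finset.sum_range_sub' (fun n => Φ (u n)) N
      _ ≤ Φ (u 0) := sub_le_self _ (h.nonneg (hu_nonneg N))
      _ ≤ Φ a := h.antitoneOn ha (hu_nonneg 0) hau
  have hsummable : Summable fun n => |f (u n) - f (v n)| :=
    summable_of_sum_range_le (fun _ => abs_nonneg _) hpartial
  exact (tsum_of_norm_bounded hsummable.hasSum fun _ => (norm_eq_abs _).le).trans
    (hsummable.tsum_le_of_sum_range_le hpartial)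

/-- The hypotheses on `a` and `b` say that the lattices `a + ℤp` and `b + ℤp` interlace and that `a`
is the point of their union closest to the origin. Apart from `a` itself, the points therefore pair
up into disjoint intervals inside `[|a|, ∞)` and `(-∞, -|a|]`. -/
lemma abs_periodization_sub_periodization_le (hf : HasGaussianDecay f)
    (hpos : IsVariationMajorant f Φ) (hneg : IsVariationMajorant (fun y => f (-y)) Φ)
    {p a b : ℝ} (hp : 0 < p) (hab : |a| ≤ b) (hbp : b ≤ p - |a|) :
    |periodization f p a - periodization f p b| ≤ |f a| + 2 * Φ |a| := by
  have ha := abs_le.1 (le_refl |a|)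
  have hright : |∑' n : ℕ, (f (b + n * p) - f (a + (n + 1) * p))| ≤ Φ |a| :=
    hpos.abs_tsum_sub_le (abs_nonneg a) (by simpa using hab) (fun n => by linarith)
      fun n => by push_cast; linarith
  have hleft : |∑' n : ℕ, (f (b - (n + 1) * p) - f (a - (n + 1) * p))| ≤ Φ |a| := by
    have hreflect (n : ℕ) : f (b - (n + 1) * p) - f (a - (n + 1) * p) =
        f (-(p - b + n * p)) - f (-(-a + (n + 1) * p)) := by ring_nf
    simp only [hreflect]
    exact hneg.abs_tsum_sub_le (abs_nonneg a) (by simpa using le_sub_comm.1 hbp)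
      (fun n => by linarith) fun n => by push_cast; linarith
  rw [hf.periodization_sub_periodization hp.ne']
  refine (abs_sub _ _).trans ((add_le_add (abs_sub _ _) hleft).trans ?_)
  linarith

end VariationMajorant

section HeatKernel

/-- The one-dimensional free heat kernel at time `β`, as a function of the displacement. -/
noncomputable def heatKernel (β y : ℝ) : ℝ :=
  (2 * π * β) ^ (-(1 / 2) : ℝ) * exp (-y ^ 2 / (2 * β))

/-- The spatial derivative of `heatKernel β`. -/
noncomputable def heatKernelDeriv (β y : ℝ) : ℝ :=
  -(y / β) * heatKernel β y

lemma hasDerivAt_heatKernel (β y : ℝ) :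
    HasDerivAt (heatKernel β) (heatKernelDeriv β y) y := by
  refine ((((hasDerivAt_pow 2 y).fun_neg.div_const (2 * β)).exp).const_mul _).congr_deriv ?_
  have hdiv : -(2 * y) / (2 * β) = -(y / β) := by
    rw [neg_div, mul_div_mul_left _ _ two_ne_zero]
  simp only [heatKernelDeriv, heatKernel, Nat.cast_ofNat, Nat.add_one_sub_one, pow_one, hdiv]
  ring

lemma hasDerivAt_exp_neg_sq_div_two (u : ℝ) :
    HasDerivAt (fun u : ℝ => exp (-u ^ 2 / 2)) (-u * exp (-u ^ 2 / 2)) u := by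
  refine ((hasDerivAt_pow 2 u).fun_neg.div_const 2).exp.congr_deriv ?_
  push_cast
  ring

lemma isVariationMajorant_exp_neg_sq_div_two :
    IsVariationMajorant (fun u => exp (-u ^ 2 / 2)) fun u => exp (-u ^ 2 / 2) :=
  .of_abs_deriv_le (fun _ _ => (exp_pos _).le) hasDerivAt_exp_neg_sq_div_two
    hasDerivAt_exp_neg_sq_div_two fun u hu => by
      rw [neg_mul, neg_neg, abs_neg, abs_of_pos (by positivity)]

/-- The linear term `-u / 2` in the exponent keeps the derivative of the majorant away from zero at
the origin, where that of `u * exp (-u ^ 2 / 2)` is `1`. -/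
lemma isVariationMajorant_mul_exp_neg_sq_div_two :
    IsVariationMajorant (fun u => u * exp (-u ^ 2 / 2))
      fun u => 4 * exp (-u ^ 2 / 4 - u / 2) := by
  refine .of_abs_deriv_le (f' := fun u => (1 - u ^ 2) * exp (-u ^ 2 / 2))
    (Φ' := fun u => -(2 * (1 + u) * exp (-u ^ 2 / 4 - u / 2)))
    (fun _ _ => by positivity) (fun u => ?_) (fun u => ?_) fun u hu => ?_
  · exact ((hasDerivAt_id' u).mul (hasDerivAt_exp_neg_sq_div_two u)).congr_deriv (by ring)
  · refine ((((hasDerivAt_pow 2 u).fun_neg.div_const 4).sub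
      ((hasDerivAt_id' u).div_const 2)).exp.const_mul 4).congr_deriv ?_
    push_cast
    simp only [Pi.sub_apply]
    ring
  · have hexp : |1 - u| ≤ 2 * exp (u ^ 2 / 4 - u / 2) := by
      have := add_one_le_exp (u ^ 2 / 4 - u / 2)
      exact abs_le.2 ⟨by nlinarith [sq_nonneg (u - 2)], by nlinarith [sq_nonneg u]⟩
    calc |(1 - u ^ 2) * exp (-u ^ 2 / 2)|
        = (1 + u) * |1 - u| * exp (-u ^ 2 / 2) := by
          rw [show 1 - u ^ 2 = (1 + u) * (1 - u) by ring, abs_mul, abs_mul, abs_exp,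
            abs_of_pos (by positivity : 0 < 1 + u)]
      _ ≤ (1 + u) * (2 * exp (u ^ 2 / 4 - u / 2)) * exp (-u ^ 2 / 2) := by gcongr
      _ = -(-(2 * (1 + u) * exp (-u ^ 2 / 4 - u / 2))) := by
          rw [show -u ^ 2 / 4 - u / 2 = (u ^ 2 / 4 - u / 2) + -u ^ 2 / 2 by ring, exp_add]
          ring

lemma abs_mul_exp_neg_sq_div_two_le (u : ℝ) : |u * exp (-u ^ 2 / 2)| ≤ exp (-u ^ 2 / 4) := by
  have hu : |u| ≤ exp (u ^ 2 / 4) := by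
    nlinarith [add_one_le_exp (u ^ 2 / 4), sq_nonneg (|u| - 2), sq_abs u]
  calc |u * exp (-u ^ 2 / 2)| = |u| * exp (-u ^ 2 / 2) := by rw [abs_mul, abs_exp]
    _ ≤ exp (u ^ 2 / 4) * exp (-u ^ 2 / 2) := by gcongr
    _ = exp (-u ^ 2 / 4) := by rw [← exp_add]; ring_nf

variable {β : ℝ}

lemma heatKernel_pos (hβ : 0 < β) (y : ℝ) : 0 < heatKernel β y := by
  unfold heatKernel
  positivity

lemma heatKernel_neg (β y : ℝ) : heatKernel β (-y) = heatKernel β y := by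
  simp only [heatKernel, neg_sq]

lemma heatKernel_abs (β y : ℝ) : heatKernel β |y| = heatKernel β y := by
  simp only [heatKernel, sq_abs]

lemma heatKernelDeriv_neg (β y : ℝ) : heatKernelDeriv β (-y) = -heatKernelDeriv β y := by
  simp only [heatKernelDeriv, heatKernel_neg, neg_div, neg_mul]

lemma heatKernel_eq_div_sqrt (hβ : 0 < β) (y : ℝ) :
    heatKernel β y = (2 * π * β) ^ (-(1 / 2) : ℝ) * exp (-(y / √β) ^ 2 / 2) := by
  rw [heatKernel, div_pow, sq_sqrt hβ.le, neg_div, neg_div, div_div, mul_comm β]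

lemma rpow_neg_half_two_pi_mul (hβ : 0 < β) :
    (2 * π * β) ^ (-(1 / 2) : ℝ) = √2 * (2 * π * (2 * β)) ^ (-(1 / 2) : ℝ) := by
  rw [mul_left_comm (2 * π), mul_rpow (x := 2) zero_le_two (by positivity), ← mul_assoc,
    sqrt_eq_rpow, ← rpow_add two_pos, add_neg_cancel, rpow_zero, one_mul]

lemma sqrt_two_mul_heatKernel_two_mul (hβ : 0 < β) (y : ℝ) :
    √2 * heatKernel (2 * β) y = (2 * π * β) ^ (-(1 / 2) : ℝ) * exp (-(y / √β) ^ 2 / 4) := by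
  rw [heatKernel_eq_div_sqrt (by positivity), ← mul_assoc, ← rpow_neg_half_two_pi_mul hβ,
    sqrt_mul zero_le_two, div_pow, div_pow, mul_pow, sq_sqrt zero_le_two]
  ring_nf

lemma heatKernel_le (hβ : 0 < β) (y : ℝ) :
    heatKernel β y ≤ √2 * heatKernel (2 * β) y := by
  rw [heatKernel_eq_div_sqrt hβ, sqrt_two_mul_heatKernel_two_mul hβ]
  gcongr _ * exp ?_
  linarith [sq_nonneg (y / √β)]

lemma heatKernelDeriv_eq_div_sqrt (hβ : 0 < β) (y : ℝ) :
    heatKernelDeriv β y = -((√β)⁻¹ * (2 * π * β) ^ (-(1 / 2) : ℝ)) *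
      (y / √β * exp (-(y / √β) ^ 2 / 2)) := by
  have hy : y / β = (√β)⁻¹ * (y / √β) := by
    rw [inv_mul_eq_div, div_div, mul_self_sqrt hβ.le]
  rw [heatKernelDeriv, heatKernel_eq_div_sqrt hβ, hy]
  ring

lemma abs_heatKernelDeriv_le (hβ : 0 < β) (y : ℝ) :
    |heatKernelDeriv β y| ≤ (√β)⁻¹ * (√2 * heatKernel (2 * β) y) := by
  rw [heatKernelDeriv_eq_div_sqrt hβ, sqrt_two_mul_heatKernel_two_mul hβ, abs_mul, abs_neg,
    abs_of_pos (by positivity : 0 < (√β)⁻¹ * (2 * π * β) ^ (-(1 / 2) : ℝ)), ← mul_assoc]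
  gcongr
  exact abs_mul_exp_neg_sq_div_two_le _

lemma hasGaussianDecay_heatKernel (hβ : 0 < β) : HasGaussianDecay (heatKernel β) := by
  refine ⟨(2 * π * β) ^ (-(1 / 2) : ℝ), (2 * β)⁻¹, by positivity, fun y => ?_⟩
  rw [abs_of_pos (heatKernel_pos hβ y), heatKernel, neg_mul, inv_mul_eq_div, neg_div]

lemma hasGaussianDecay_heatKernelDeriv (hβ : 0 < β) : HasGaussianDecay (heatKernelDeriv β) := by
  obtain ⟨C, c, hc, hC⟩ := hasGaussianDecay_heatKernel (by positivity : 0 < 2 * β)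
  refine ⟨(√β)⁻¹ * (√2 * C), c, hc, fun y => (abs_heatKernelDeriv_le hβ y).trans ?_⟩
  rw [mul_assoc, mul_assoc]
  gcongr
  exact (le_abs_self _).trans (hC y)

lemma isVariationMajorant_heatKernel (hβ : 0 < β) :
    IsVariationMajorant (heatKernel β) (heatKernel β) := by
  have h := isVariationMajorant_exp_neg_sq_div_two.rescale ((2 * π * β) ^ (-(1 / 2) : ℝ))
    (sqrt_pos.2 hβ)
  simpa only [abs_of_pos (by positivity : 0 < (2 * π * β) ^ (-(1 / 2) : ℝ)),
    ← heatKernel_eq_div_sqrt hβ] using h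

lemma exists_isVariationMajorant_heatKernelDeriv (hβ : 0 < β) :
    ∃ Φ, IsVariationMajorant (heatKernelDeriv β) Φ ∧
      IsVariationMajorant (fun y => heatKernelDeriv β (-y)) Φ ∧
      ∀ a, 0 ≤ a → Φ a ≤ 4 * ((√β)⁻¹ * (√2 * heatKernel (2 * β) a)) := by
  set k : ℝ := (√β)⁻¹ * (2 * π * β) ^ (-(1 / 2) : ℝ) with hk
  have hk₀ : 0 < k := by positivity
  have h (c : ℝ) := isVariationMajorant_mul_exp_neg_sq_div_two.rescale c (sqrt_pos.2 hβ)
  have hderiv : heatKernelDeriv β = fun y => -k * (y / √β * exp (-(y / √β) ^ 2 / 2)) :=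
    funext (heatKernelDeriv_eq_div_sqrt hβ)
  have hderiv_neg : (fun y => heatKernelDeriv β (-y)) =
      fun y => k * (y / √β * exp (-(y / √β) ^ 2 / 2)) := by
    simp only [heatKernelDeriv_neg, hderiv, neg_mul, neg_neg]
  refine ⟨fun y => k * (4 * exp (-(y / √β) ^ 2 / 4 - y / √β / 2)), ?_, ?_, fun a ha => ?_⟩
  · simpa only [← hderiv, abs_neg, abs_of_pos hk₀] using h (-k)
  · simpa only [← hderiv_neg, abs_of_pos hk₀] using h k
  · rw [sqrt_two_mul_heatKernel_two_mul hβ, ← mul_assoc (√β)⁻¹, ← hk, mul_left_comm 4]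
    refine mul_le_mul_of_nonneg_left ?_ hk₀.le
    gcongr
    exact sub_le_self _ (by positivity)

end HeatKernel

section DirichletKernel

variable {L x x' β : ℝ}

lemma g0L_eq_periodization_sub_periodization (hL : L ≠ 0) (hβ : 0 < β) (x x' : ℝ) :
    g0L L x x' β = periodization (heatKernel β) (2 * L) (x - x') -
      periodization (heatKernel β) (2 * L) (x + x' + L) := by
  have hsummable := (hasGaussianDecay_heatKernel hβ).summable_translates
    (mul_ne_zero two_ne_zero hL)
  have hreindex : periodization (heatKernel β) (2 * L) (x + x' + L) =
      ∑' m : ℤ, heatKernel β (x + x' + L + (-1 - m : ℤ) * (2 * L)) :=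
    ((Equiv.subLeft (-1 : ℤ)).tsum_eq _).symm
  have hsummable_reindex :
      Summable fun m : ℤ => heatKernel β (x + x' + L + (-1 - m : ℤ) * (2 * L)) :=
    (hsummable (x + x' + L)).comp_injective (Equiv.subLeft (-1 : ℤ)).injective
  rw [hreindex, periodization, ← (hsummable _).tsum_sub hsummable_reindex, g0L, ← tsum_mul_left]
  refine tsum_congr fun m => ?_
  rw [mul_sub]
  simp only [heatKernel]
  push_cast
  ring_nf

/-- The partial derivative of `g0L` in its first spatial variable, obtained by differentiating the
image series term by term. -/
noncomputable def g0LDeriv (L x x' β : ℝ) : ℝ :=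
  periodization (heatKernelDeriv β) (2 * L) (x - x') -
    periodization (heatKernelDeriv β) (2 * L) (x + x' + L)

lemma hasDerivAt_g0L (hL : L ≠ 0) (hβ : 0 < β) (x x' : ℝ) :
    HasDerivAt (fun t => g0L L t x' β) (g0LDeriv L x x' β) x := by
  have hP := (hasGaussianDecay_heatKernel hβ).hasDerivAt_periodization
    (hasGaussianDecay_heatKernelDeriv hβ) (hasDerivAt_heatKernel β) (mul_ne_zero two_ne_zero hL)
  simp only [g0L_eq_periodization_sub_periodization hL hβ, add_assoc _ x' L]
  simpa only [g0LDeriv, add_assoc] using!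
    ((hP _).comp_sub_const x x').sub ((hP _).comp_add_const x (x' + L))

lemma abs_sub_le_add_add_of_mem_Icc (hx : x ∈ Set.Icc (-(L / 2)) (L / 2))
    (hx' : x' ∈ Set.Icc (-(L / 2)) (L / 2)) :
    |x - x'| ≤ x + x' + L ∧ x + x' + L ≤ 2 * L - |x - x'| := by
  obtain ⟨hx₁, hx₂⟩ := hx
  obtain ⟨hx'₁, hx'₂⟩ := hx'
  rw [le_sub_comm]
  exact ⟨abs_le.2 ⟨by linarith, by linarith⟩, abs_le.2 ⟨by linarith, by linarith⟩⟩

lemma abs_g0L_le (hL : 0 < L) (hβ : 0 < β) (hx : x ∈ Set.Icc (-(L / 2)) (L / 2))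
    (hx' : x' ∈ Set.Icc (-(L / 2)) (L / 2)) :
    |g0L L x x' β| ≤ 3 * √2 * heatKernel (2 * β) (x - x') := by
  obtain ⟨h₁, h₂⟩ := abs_sub_le_add_add_of_mem_Icc hx hx'
  have hΦ := isVariationMajorant_heatKernel hβ
  have h := abs_periodization_sub_periodization_le (hasGaussianDecay_heatKernel hβ) hΦ
    (by simpa only [heatKernel_neg] using hΦ) (by positivity) h₁ h₂
  rw [heatKernel_abs, abs_of_pos (heatKernel_pos hβ _)] at h
  rw [g0L_eq_periodization_sub_periodization hL.ne' hβ]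
  linarith [heatKernel_le hβ (x - x')]

lemma abs_g0LDeriv_le (hL : 0 < L) (hβ : 0 < β) (hx : x ∈ Set.Icc (-(L / 2)) (L / 2))
    (hx' : x' ∈ Set.Icc (-(L / 2)) (L / 2)) :
    |g0LDeriv L x x' β| ≤ 9 * ((√β)⁻¹ * (√2 * heatKernel (2 * β) (x - x'))) := by
  obtain ⟨h₁, h₂⟩ := abs_sub_le_add_add_of_mem_Icc hx hx'
  obtain ⟨Φ, hpos, hneg, hΦ⟩ := exists_isVariationMajorant_heatKernelDeriv hβ
  have h := abs_periodization_sub_periodization_le (hasGaussianDecay_heatKernelDeriv hβ) hpos hneg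
    (by positivity) h₁ h₂
  have hΦ_le := hΦ _ (abs_nonneg (x - x'))
  rw [heatKernel_abs] at hΦ_le
  exact h.trans (by linarith [abs_heatKernelDeriv_le hβ (x - x')])

end DirichletKernel

section Cube

lemma G0inf_eq_prod_heatKernel (x x' : Fin 3 → ℝ) {β : ℝ} (hβ : 0 ≤ β) :
    G0inf x x' β = ∏ i, heatKernel β (x i - x' i) := by
  have hnormalization : (2 * π * β) ^ (-(3 / 2) : ℝ) = ((2 * π * β) ^ (-(1 / 2) : ℝ)) ^ 3 := by
    rw [← rpow_mul_natCast (by positivity)]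
    norm_num
  simp only [G0inf, heatKernel, hnormalization, Finset.prod_mul_distrib, Finset.prod_const,
    Finset.card_univ, Fintype.card_fin, ← exp_sum, ← Finset.sum_div, Finset.sum_neg_distrib]

lemma prod_apply_update {ι R α : Type*} [Fintype ι] [DecidableEq ι] [CommMonoid R]
    (f : ι → α → R) (x : ι → α) (j : ι) (t : α) :
    ∏ i, f i (Function.update x j t i) = f j t * ∏ i ∈ Finset.univ \ {j}, f i (x i) := by
  simp only [Function.apply_update f, Finset.prod_update_of_mem (Finset.mem_univ j)]

lemma abs_prod_le_pow_card_mul_prod {ι : Type*} (s : Finset ι) {f g : ι → ℝ} {c : ℝ}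
    (h : ∀ i ∈ s, |f i| ≤ c * g i) : |∏ i ∈ s, f i| ≤ c ^ s.card * ∏ i ∈ s, g i := by
  rw [Finset.abs_prod, ← Finset.prod_const, ← Finset.prod_mul_distrib]
  exact Finset.prod_le_prod (fun i _ => abs_nonneg _) h

lemma hasDerivAt_Z0L {L β : ℝ} (hL : L ≠ 0) (hβ : 0 < β) (x x' : Fin 3 → ℝ) (j : Fin 3) :
    HasDerivAt (fun t => Z0L L (Function.update x j t) x' β)
      (g0LDeriv L (x j) (x' j) β * ∏ i ∈ Finset.univ \ {j}, g0L L (x i) (x' i) β -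
        heatKernelDeriv β (x j - x' j) *
          ∏ i ∈ Finset.univ \ {j}, heatKernel β (x i - x' i)) (x j) := by
  simp only [Z0L, G0L, G0inf_eq_prod_heatKernel _ _ hβ.le,
    prod_apply_update (fun i t => g0L L t (x' i) β),
    prod_apply_update (fun i t => heatKernel β (t - x' i))]
  exact ((hasDerivAt_g0L hL hβ _ _).mul_const _).sub
    (((hasDerivAt_heatKernel β _).comp_sub_const _ _).mul_const _)

end Cube

theorem stmt_11_general :
    ∃ c₁ c₂ : ℝ, 0 < c₁ ∧ 0 < c₂ ∧
      ∀ (L β : ℝ) (x x' : Fin 3 → ℝ) (j : Fin 3), 0 < β →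
        (∀ i, x i ∈ Set.Ioo (-(L / 2)) (L / 2)) →
        (∀ i, x' i ∈ Set.Ioo (-(L / 2)) (L / 2)) →
          |deriv (fun t : ℝ => Z0L L (Function.update x j t) x' β) (x j)|
            ≤ c₁ * β ^ (-(1/2) : ℝ) * G0inf x x' (c₂ * β) := by
  -- `164 = 9 * (3 ^ 2 * 2) + 2`: the image series contributes the first term, `G0inf` the second.
  refine ⟨164 * √2, 2, by positivity, two_pos, fun L β x x' j hβ hx hx' => ?_⟩
  have hL : 0 < L := by linarith [(hx j).1, (hx j).2]
  replace hx i := Set.Ioo_subset_Icc_self (hx i)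
  replace hx' i := Set.Ioo_subset_Icc_self (hx' i)
  have hcard : (Finset.univ \ {j} : Finset (Fin 3)).card = 2 := by
    simp [Finset.card_sdiff]
  have hg := abs_prod_le_pow_card_mul_prod (Finset.univ \ {j}) fun i _ =>
    abs_g0L_le hL hβ (hx i) (hx' i)
  have hH := abs_prod_le_pow_card_mul_prod (Finset.univ \ {j}) fun i _ =>
    (abs_of_pos (heatKernel_pos hβ (x i - x' i))).trans_le (heatKernel_le hβ _)
  rw [hcard, mul_pow, sq_sqrt zero_le_two] at hg
  rw [hcard, sq_sqrt zero_le_two] at hH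
  have hprod : G0inf x x' (2 * β) = heatKernel (2 * β) (x j - x' j) *
      ∏ i ∈ Finset.univ \ {j}, heatKernel (2 * β) (x i - x' i) := by
    rw [G0inf_eq_prod_heatKernel _ _ (by positivity),
      Finset.prod_eq_mul_prod_sdiff_singleton_of_mem (Finset.mem_univ j)]
  have hH_nonneg := (heatKernel_pos (mul_pos two_pos hβ) (x j - x' j)).le
  rw [(hasDerivAt_Z0L hL.ne' hβ x x' j).deriv, hprod, rpow_neg hβ.le, ← sqrt_eq_rpow]
  refine (abs_sub _ _).trans ?_
  rw [abs_mul, abs_mul]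
  refine (add_le_add
    (mul_le_mul (abs_g0LDeriv_le hL hβ (hx j) (hx' j)) hg (abs_nonneg _) (by positivity))
    (mul_le_mul (abs_heatKernelDeriv_le hβ _) hH (abs_nonneg _) (by positivity))).trans_eq ?_
  ring

/-- Gaussian bound for the first spatial derivatives of the boundary remainder:
`|∂Z_{0,L}/∂x_j (x, x'; β)| ≤ c₁ (1+β) β^{-1/2} G_{0,∞}(x, x'; c₂ β)`. -/
theorem stmt_11 :
    ∃ c₁ c₂ : ℝ, 0 < c₁ ∧ 0 < c₂ ∧
      ∀ (L β : ℝ) (x x' : Fin 3 → ℝ) (j : Fin 3), 1 ≤ L → 0 < β →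
        (∀ i, x i ∈ Set.Ioo (-(L / 2)) (L / 2)) →
        (∀ i, x' i ∈ Set.Ioo (-(L / 2)) (L / 2)) →
          |deriv (fun t : ℝ => Z0L L (Function.update x j t) x' β) (x j)|
            ≤ c₁ * (1 + β) * β ^ (-(1/2) : ℝ) * G0inf x x' (c₂ * β) := by
  obtain ⟨c₁, c₂, hc₁, hc₂, h⟩ := stmt_11_general
  refine ⟨c₁, c₂, hc₁, hc₂, fun L β x x' j _ hβ hx hx' => (h L β x x' j hβ hx hx').trans ?_⟩
  have hG : 0 ≤ G0inf x x' (c₂ * β) := by unfold G0inf; positivity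
  gcongr
  exact le_mul_of_one_le_right hc₁.le (by linarith)
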